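/- arXiv:2305.12942 — 4 statements merged into one kernel-verified Lean document; each statement's English description precedes it below -/
import Mathlib

section
/- Let p be a prime number and n ≥ 3 a positive integer. (1) If p = 2, then Γ(ℤ_{p^n}) is not partitionable into global defensive alliances. (2) If p ≥ 3, then Γ(ℤ_{p^n}) is partitionable into global defensive alliances and ψ_g(Γ(ℤ_{p^n})) = 2. -/
open Classical

/-- The set of zero-divisors of `R` (including `0`). -/
def zeroDivisorSet (R : Type*) [CommRing R] : Set R :=
  {x : R | ∃ y : R, y ≠ 0 ∧ x * y = 0}

/-- Vertices of the zero-divisor graph: the nonzero zero-divisors of `R`. -/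
abbrev ZDV (R : Type*) [CommRing R] : Type _ :=
  {x : R // x ≠ 0 ∧ ∃ y : R, y ≠ 0 ∧ x * y = 0}

/-- The zero-divisor graph `Γ(R)` of a commutative ring `R`: vertices are the nonzero
zero-divisors, and distinct vertices `x`, `y` are adjacent iff `x * y = 0`. -/
def zdGraph (R : Type*) [CommRing R] : SimpleGraph (ZDV R) where
  Adj a b := a ≠ b ∧ (a : R) * (b : R) = 0
  symm := by
    refine ⟨?_⟩
    intro a b h
    exact ⟨h.1.symm, by rw [mul_comm]; exact h.2⟩
  loopless := by
    refine ⟨?_⟩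
    intro a h
    exact h.1 rfl

/-- `degIn G S v` is the number of neighbors of `v` lying in `S`. -/
noncomputable def degIn {V : Type*} (G : SimpleGraph V) (S : Set V) (v : V) : ℕ :=
  Set.ncard {u : V | u ∈ S ∧ G.Adj v u}

/-- `S` is a dominating set: every vertex outside `S` has a neighbor in `S`. -/
def IsDominatingSet {V : Type*} (G : SimpleGraph V) (S : Set V) : Prop :=
  ∀ v ∉ S, ∃ u ∈ S, G.Adj v u

/-- `S` is a defensive alliance: `S` is nonempty and every `v ∈ S` satisfies
`deg_S(v) + 1 ≥ deg_{Sᶜ}(v)`. -/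
def IsDefensiveAlliance {V : Type*} (G : SimpleGraph V) (S : Set V) : Prop :=
  S.Nonempty ∧ ∀ v ∈ S, degIn G Sᶜ v ≤ degIn G S v + 1

/-- A global defensive alliance is a defensive alliance that is also a dominating set. -/
def IsGlobalDefensiveAlliance {V : Type*} (G : SimpleGraph V) (S : Set V) : Prop :=
  IsDefensiveAlliance G S ∧ IsDominatingSet G S

/-- `P` is a partition of the vertex set of `G` into global defensive alliances. -/
def IsGDAPartition {V : Type*} (G : SimpleGraph V) (P : Finset (Set V)) : Prop :=
  (∀ S ∈ P, IsGlobalDefensiveAlliance G S) ∧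
  (⋃₀ (P : Set (Set V)) = Set.univ) ∧
  ((P : Set (Set V)).Pairwise Disjoint)

/-- The global defensive alliance partition number `ψ_g(G)`: the maximum number of parts in
a partition of the vertex set into global defensive alliances. -/
noncomputable def psiG {V : Type*} (G : SimpleGraph V) : ℕ :=
  sSup {n : ℕ | ∃ P : Finset (Set V), IsGDAPartition G P ∧ P.card = n}

/-- `G` is partitionable into global defensive alliances iff `ψ_g(G) ≥ 2`. -/
def PartitionableGDA {V : Type*} (G : SimpleGraph V) : Prop :=
  2 ≤ psiG G

/-- The global defensive alliance number `γ_a(G)`: the minimum cardinality of a global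
defensive alliance. -/
noncomputable def gammaA {V : Type*} (G : SimpleGraph V) : ℕ :=
  sInf {n : ℕ | ∃ S : Set V, IsGlobalDefensiveAlliance G S ∧ S.ncard = n}

lemma exists_of_two_le_psiG {V : Type*} (G : SimpleGraph V) (h : 2 ≤ psiG G) :
    ∃ P : Finset (Set V), IsGDAPartition G P ∧ 2 ≤ P.card := by
  have hb : BddAbove {n : ℕ | ∃ P : Finset (Set V), IsGDAPartition G P ∧ P.card = n} := by
    by_contra hb
    have := Nat.sSup_of_not_bddAbove hb
    unfold psiG at h
    omega
  have hne : {n : ℕ | ∃ P : Finset (Set V), IsGDAPartition G P ∧ P.card = n}.Nonempty := by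
    by_contra hne
    rw [Set.not_nonempty_iff_eq_empty] at hne
    unfold psiG at h
    rw [hne] at h
    simp at h
  obtain ⟨P, hP, hc⟩ := Nat.sSup_mem hne hb
  refine ⟨P, hP, ?_⟩
  rw [hc]
  exact h

/-- a universal vertex in a defensive alliance forces it to be at least as large as its
complement -/
lemma card_of_universal {V : Type*} [Finite V] (G : SimpleGraph V) (S : Set V)
    (hS : IsDefensiveAlliance G S) (u : V) (hu : u ∈ S) (huniv : ∀ v, v ≠ u → G.Adj u v) :
    Sᶜ.ncard ≤ S.ncard := by
  have h := hS.2 u hu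
  unfold degIn at h
  have h1 : {v : V | v ∈ Sᶜ ∧ G.Adj u v} = Sᶜ := by
    ext v
    simp only [Set.mem_setOf_eq, Set.mem_compl_iff, and_iff_left_iff_imp]
    intro hv
    exact huniv v (fun e => hv (e ▸ hu))
  have h2 : {v : V | v ∈ S ∧ G.Adj u v} ⊆ S \ {u} := by
    rintro v ⟨hv, ha⟩
    exact ⟨hv, fun e => G.ne_of_adj ha (Eq.symm e)⟩
  have h3 := Set.ncard_le_ncard h2 (Set.toFinite _)
  have h4 := Set.ncard_diff_singleton_add_one hu (Set.toFinite _)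
  rw [h1] at h
  omega

lemma zd_dvd (p n : ℕ) (hp : p.Prime) (hn : 3 ≤ n) (x : ZDV (ZMod (p ^ n))) :
    ∃ k : ZMod (p ^ n), (x : ZMod (p ^ n)) = p * k := by
  haveI : NeZero (p ^ n) := ⟨pow_ne_zero _ hp.ne_zero⟩
  obtain ⟨x, hx0, y, hy, hxy⟩ := x
  by_cases h : p ∣ x.val
  · obtain ⟨k, hk⟩ := h
    refine ⟨k, ?_⟩
    change x = _
    rw [← ZMod.natCast_zmod_val x, hk]
    push_cast
    rfl
  · exfalso
    have hc : Nat.Coprime x.val (p ^ n) :=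
      (Nat.Coprime.pow_left n ((Nat.Prime.coprime_iff_not_dvd hp).2 h)).symm
    have hu : IsUnit x := by
      have := (ZMod.isUnit_iff_coprime x.val (p ^ n)).2 hc
      rwa [ZMod.natCast_zmod_val] at this
    exact hy ((hu.mul_right_eq_zero).1 hxy)

lemma pow_ne (p n k : ℕ) (hp : p.Prime) (hk : k < n) : (p : ZMod (p ^ n)) ^ k ≠ 0 := by
  intro h
  have h1 : ((p ^ k : ℕ) : ZMod (p ^ n)) = 0 := by push_cast; exact h
  rw [ZMod.natCast_eq_zero_iff] at h1
  exact absurd ((Nat.pow_dvd_pow_iff_le_right hp.one_lt).1 h1) (by omega)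

lemma pow_eq (p n : ℕ) (hn : 3 ≤ n) :
    (p : ZMod (p ^ n)) * (p : ZMod (p ^ n)) ^ (n - 1) = 0 := by
  rw [← pow_succ', Nat.sub_add_cancel (by omega)]
  have := ZMod.natCast_self (p ^ n)
  push_cast at this
  exact this

lemma sq_ne (p n : ℕ) (hp : p.Prime) (hn : 3 ≤ n) :
    (p : ZMod (p ^ n)) * (p : ZMod (p ^ n)) ≠ 0 := by
  rw [← sq]; exact pow_ne p n 2 hp (by omega)

lemma adj_of_mul (p n : ℕ) (hp : p.Prime) (hn : 3 ≤ n) (u : ZDV (ZMod (p ^ n)))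
    (hu : (p : ZMod (p ^ n)) * u = 0) (v : ZDV (ZMod (p ^ n))) (hv : v ≠ u) :
    (zdGraph (ZMod (p ^ n))).Adj u v := by
  refine ⟨hv.symm, ?_⟩
  obtain ⟨k, hk⟩ := zd_dvd p n hp hn v
  rw [hk]
  linear_combination k * hu

lemma odd_unit (n m : ℕ) (hm : Odd m) : IsUnit (m : ZMod (2 ^ n)) := by
  rw [ZMod.isUnit_iff_coprime]
  exact (Nat.Coprime.pow_left n (Nat.coprime_two_left.2 hm)).symm

lemma two_ann (n : ℕ) (hn : 3 ≤ n) (u : ZMod (2 ^ n)) (h : 2 * u = 0) (h0 : u ≠ 0) :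
    u = 2 ^ (n - 1) := by
  have h1 : ((2 * u.val : ℕ) : ZMod (2 ^ n)) = 0 := by
    push_cast; rw [ZMod.natCast_zmod_val]; exact h
  rw [ZMod.natCast_eq_zero_iff] at h1
  have hlt := ZMod.val_lt u
  have he : 2 ^ n = 2 * 2 ^ (n - 1) := by
    rw [← pow_succ', Nat.sub_add_cancel (by omega)]
  obtain ⟨q, hq⟩ := h1
  have hv : u.val ≠ 0 := fun e => h0 ((ZMod.val_eq_zero u).1 e)
  have hq1 : q = 1 := by
    have : q < 2 := by
      by_contra hh
      push Not at hh
      have := Nat.mul_le_mul_left (2 ^ n) hh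
      omega
    have : q ≠ 0 := by rintro rfl; omega
    omega
  subst hq1
  have : u.val = 2 ^ (n - 1) := by omega
  rw [← ZMod.natCast_zmod_val u, this]
  push_cast
  rfl

lemma part_two (n : ℕ) (hn : 3 ≤ n) : ¬ PartitionableGDA (zdGraph (ZMod (2 ^ n))) := by
  intro h
  obtain ⟨P, ⟨hP, hU, hD⟩, hc⟩ := exists_of_two_le_psiG _ h
  have hp2 := Nat.prime_two
  have hcne := pow_ne 2 n (n - 1) hp2 (by omega)
  have hc2 := pow_eq 2 n hn
  have h2ne := pow_ne 2 n 1 hp2 (by omega)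
  rw [pow_one] at h2ne
  push_cast at hcne hc2 h2ne
  let c : ZDV (ZMod (2 ^ n)) := ⟨2 ^ (n - 1), hcne, 2, h2ne, by rw [mul_comm]; exact hc2⟩
  have hcU : c ∈ ⋃₀ (P : Set (Set (ZDV (ZMod (2 ^ n))))) := by rw [hU]; trivial
  obtain ⟨A, hA, hcA⟩ := hcU
  obtain ⟨B, hB, hBA⟩ : ∃ B ∈ P, B ≠ A := by
    have := Finset.exists_mem_ne (show 1 < P.card by omega) A
    exact this
  have hdis : Disjoint A B := hD hA hB hBA.symm
  have hcard := card_of_universal _ A (hP A hA).1 c hcA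
    (adj_of_mul 2 n hp2 hn c (by push_cast; exact hc2))
  -- elements `2 * unit` are not in `A`
  have key : ∀ x ∈ A, ∀ k : ZMod (2 ^ n), (x : ZMod (2 ^ n)) = 2 * k → ¬ IsUnit k := by
    intro x hx k hk hku
    have hxB : x ∉ B := fun hb => Set.disjoint_left.1 hdis hx hb
    obtain ⟨u, huB, hne, hmul⟩ := (hP B hB).2 x hxB
    have h0 : 2 * (u : ZMod (2 ^ n)) = 0 := by
      apply (hku.mul_right_eq_zero).1
      rw [hk] at hmul
      linear_combination hmul
    have huc : u = c := Subtype.ext (two_ann n hn u h0 u.2.1)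
    exact Set.disjoint_left.1 hdis hcA (huc ▸ huB)
  let t : ZDV (ZMod (2 ^ n)) := ⟨2, h2ne, 2 ^ (n - 1), hcne, hc2⟩
  have htA : t ∈ Aᶜ := fun ht => key t ht 1 (by simp [t]) isUnit_one
  have hf : ∀ x : ZDV (ZMod (2 ^ n)), ∃ y : ZDV (ZMod (2 ^ n)),
      x ∈ A → y ∈ Aᶜ \ {t} ∧ (y : ZMod (2 ^ n)) = x + 2 := by
    intro x
    by_cases hx : x ∈ A
    · obtain ⟨k, hk⟩ := zd_dvd 2 n hp2 hn x
      push_cast at hk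
      have hku := key x hx k hk
      have hev : ¬ Odd k.val := fun ho => hku (by
        have := odd_unit n k.val ho
        rwa [ZMod.natCast_zmod_val] at this)
      have hu1 : IsUnit (k + 1) := by
        have := odd_unit n (k.val + 1) (Nat.not_odd_iff_even.1 hev).add_one
        push_cast at this
        rwa [ZMod.natCast_zmod_val] at this
      have hx2 : (x : ZMod (2 ^ n)) + 2 = 2 * (k + 1) := by rw [hk]; ring
      refine ⟨⟨x + 2, ?_, 2 ^ (n - 1), hcne, ?_⟩, fun _ => ⟨⟨?_, ?_⟩, rfl⟩⟩
      · rw [hx2]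
        intro h0
        exact h2ne ((hu1.mul_left_eq_zero).1 h0)
      · rw [hx2]; linear_combination (k + 1) * hc2
      · intro hm
        exact key _ hm (k + 1) hx2 hu1
      · intro he
        have he2 : (x : ZMod (2 ^ n)) + 2 = 2 := congrArg Subtype.val he
        exact x.2.1 (by linear_combination he2)
    · exact ⟨x, fun h => absurd h hx⟩
  choose f hf using hf
  have hle : A.ncard ≤ (Aᶜ \ {t}).ncard := by
    refine Set.ncard_le_ncard_of_injOn f (fun x hx => (hf x hx).1) ?_ (Set.toFinite _)
    intro x hx y hy hxy
    have h1 := (hf x hx).2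
    have h2 := (hf y hy).2
    rw [hxy, h2] at h1
    exact Subtype.ext (by linear_combination -h1)
  have h4 := Set.ncard_diff_singleton_add_one htA (Set.toFinite _)
  omega

lemma two_mul_ne (p n : ℕ) (hp : p.Prime) (hp3 : 3 ≤ p) (x : ZMod (p ^ n)) (hx : x ≠ 0) :
    x ≠ -x := by
  intro h
  have hu : IsUnit ((2 : ℕ) : ZMod (p ^ n)) := by
    rw [ZMod.isUnit_iff_coprime]
    apply Nat.Coprime.pow_right
    exact (Nat.coprime_primes Nat.prime_two hp).2 (by omega)
  apply hx
  apply (hu.mul_right_eq_zero).1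
  push_cast
  linear_combination h

/-- negation on the vertices -/
def zneg {R : Type*} [CommRing R] (x : ZDV R) : ZDV R :=
  ⟨-x.1, neg_ne_zero.2 x.2.1, by
    obtain ⟨y, hy, h⟩ := x.2.2
    exact ⟨y, hy, by rw [neg_mul, h, neg_zero]⟩⟩

lemma zneg_zneg {R : Type*} [CommRing R] (x : ZDV R) : zneg (zneg x) = x :=
  Subtype.ext (neg_neg x.1)

/-- a half system is a global defensive alliance -/
lemma half_gda (p n : ℕ) (hp : p.Prime) (hn : 3 ≤ n)
    (S : Set (ZDV (ZMod (p ^ n)))) (hS : ∀ x, x ∈ Sᶜ ↔ zneg x ∈ S) :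
    IsGlobalDefensiveAlliance (zdGraph (ZMod (p ^ n))) S := by
  haveI : NeZero (p ^ n) := ⟨pow_ne_zero _ hp.ne_zero⟩
  have hp1 := pow_ne p n 1 hp (by omega)
  rw [pow_one] at hp1
  let c : ZDV (ZMod (p ^ n)) := ⟨(p : ZMod (p ^ n)) ^ (n - 1), pow_ne p n (n - 1) hp (by omega),
    p, hp1, by rw [mul_comm]; exact pow_eq p n hn⟩
  have hc : (p : ZMod (p ^ n)) * c = 0 := pow_eq p n hn
  obtain ⟨d, hdS, hd⟩ : ∃ d ∈ S, (p : ZMod (p ^ n)) * (d : ZMod (p ^ n)) = 0 := by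
    by_cases h : c ∈ S
    · exact ⟨c, h, hc⟩
    · refine ⟨zneg c, (hS c).1 h, ?_⟩
      change (p : ZMod (p ^ n)) * (-(c : ZMod (p ^ n))) = 0
      rw [mul_neg, hc, neg_zero]
  refine ⟨⟨⟨d, hdS⟩, ?_⟩, ?_⟩
  · intro v hv
    unfold degIn
    have h1 : {u | u ∈ Sᶜ ∧ (zdGraph (ZMod (p ^ n))).Adj v u}.ncard ≤
        (insert v {u | u ∈ S ∧ (zdGraph (ZMod (p ^ n))).Adj v u}).ncard := by
      refine Set.ncard_le_ncard_of_injOn zneg ?_ ?_ (Set.toFinite _)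
      · rintro u ⟨hu, -, hm⟩
        by_cases e : zneg u = v
        · exact Or.inl e
        · refine Or.inr ⟨(hS u).1 hu, fun h => e h.symm, ?_⟩
          change (v : ZMod (p ^ n)) * (-(u : ZMod (p ^ n))) = 0
          rw [mul_neg, hm, neg_zero]
      · intro x _ y _ h
        rw [← zneg_zneg x, h, zneg_zneg]
    exact h1.trans (Set.ncard_insert_le _ _)
  · intro v hv
    exact ⟨d, hdS, (adj_of_mul p n hp hn d hd v (fun e => hv (e ▸ hdS))).symm⟩

lemma exists_two (p n : ℕ) (hp : p.Prime) (hn : 3 ≤ n) (hp3 : 3 ≤ p) :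
    ∃ P : Finset (Set (ZDV (ZMod (p ^ n)))),
      IsGDAPartition (zdGraph (ZMod (p ^ n))) P ∧ P.card = 2 := by
  haveI : NeZero (p ^ n) := ⟨pow_ne_zero _ hp.ne_zero⟩
  let S : Set (ZDV (ZMod (p ^ n))) := {x | x.1.val < (-x.1).val}
  have hS : ∀ x, x ∈ Sᶜ ↔ zneg x ∈ S := by
    intro x
    change ¬ (x.1.val < (-x.1).val) ↔ (-x.1).val < (- -x.1).val
    rw [neg_neg]
    have : x.1.val ≠ (-x.1).val := fun h =>
      two_mul_ne p n hp hp3 x.1 x.2.1 (ZMod.val_injective _ h)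
    omega
  have hS' : ∀ x, x ∈ Sᶜᶜ ↔ zneg x ∈ Sᶜ := by
    intro x
    rw [hS, zneg_zneg, compl_compl]
  have g1 := half_gda p n hp hn S hS
  have g2 := half_gda p n hp hn Sᶜ hS'
  have hne : S ≠ Sᶜ := by
    intro h
    obtain ⟨x, hx⟩ := g1.1.1
    exact (h ▸ hx : x ∈ Sᶜ) hx
  refine ⟨{S, Sᶜ}, ⟨?_, ?_, ?_⟩, Finset.card_pair hne⟩
  · intro T hT
    rw [Finset.mem_insert, Finset.mem_singleton] at hT
    rcases hT with rfl | rfl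
    · exact g1
    · exact g2
  · simp
  · rw [Finset.coe_pair]
    refine Set.pairwise_pair_of_symm.2 (fun _ => ?_)
    exact disjoint_compl_right

lemma gda_half (p n : ℕ) (hp : p.Prime) (hn : 3 ≤ n) (hp3 : 3 ≤ p)
    (S : Set (ZDV (ZMod (p ^ n)))) (hS : IsGlobalDefensiveAlliance (zdGraph (ZMod (p ^ n))) S) :
    Sᶜ.ncard ≤ S.ncard := by
  haveI : NeZero (p ^ n) := ⟨pow_ne_zero _ hp.ne_zero⟩
  have hp1 := pow_ne p n 1 hp (by omega)
  rw [pow_one] at hp1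
  let c : ZDV (ZMod (p ^ n)) := ⟨(p : ZMod (p ^ n)) ^ (n - 1), pow_ne p n (n - 1) hp (by omega),
    p, hp1, by rw [mul_comm]; exact pow_eq p n hn⟩
  have hc : (p : ZMod (p ^ n)) * c = 0 := pow_eq p n hn
  have hc' : (p : ZMod (p ^ n)) * (zneg c : ZDV (ZMod (p ^ n))) = 0 := by
    change (p : ZMod (p ^ n)) * (-(c : ZMod (p ^ n))) = 0
    rw [mul_neg, hc, neg_zero]
  let q : ZDV (ZMod (p ^ n)) := ⟨p, hp1, c.1, c.2.1, hc⟩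
  have hq : ∀ u : ZDV (ZMod (p ^ n)), (p : ZMod (p ^ n)) * u = 0 → q ≠ u := by
    rintro u hu rfl
    exact sq_ne p n hp hn hu
  obtain ⟨u, huS, hu⟩ : ∃ u ∈ S, (p : ZMod (p ^ n)) * (u : ZMod (p ^ n)) = 0 := by
    by_cases hqS : q ∈ S
    · by_contra hno
      push Not at hno
      have h := hS.1.2 q hqS
      unfold degIn at h
      have h1 : {u | u ∈ S ∧ (zdGraph (ZMod (p ^ n))).Adj q u} = ∅ := by
        rw [Set.eq_empty_iff_forall_notMem]
        rintro u ⟨hu, -, hm⟩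
        exact hno u hu hm
      have h2 : {c, zneg c} ⊆ {u | u ∈ Sᶜ ∧ (zdGraph (ZMod (p ^ n))).Adj q u} := by
        rintro u (rfl | rfl)
        · exact ⟨fun h => hno _ h hc, hq _ hc, hc⟩
        · exact ⟨fun h => hno _ h hc', hq _ hc', hc'⟩
      have h3 := Set.ncard_le_ncard h2 (Set.toFinite _)
      have hcc : c ≠ zneg c := fun e =>
        two_mul_ne p n hp hp3 c.1 c.2.1 (congrArg Subtype.val e)
      rw [Set.ncard_pair hcc] at h3
      rw [h1, Set.ncard_empty] at h
      omega
    · obtain ⟨u, hu, -, hm⟩ := hS.2 q hqS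
      exact ⟨u, hu, hm⟩
  exact card_of_universal _ S hS.1 u huS (adj_of_mul p n hp hn u hu)

lemma card_le_two (p n : ℕ) (hp : p.Prime) (hn : 3 ≤ n) (hp3 : 3 ≤ p)
    (P : Finset (Set (ZDV (ZMod (p ^ n)))))
    (hP : IsGDAPartition (zdGraph (ZMod (p ^ n))) P) : P.card ≤ 2 := by
  haveI : NeZero (p ^ n) := ⟨pow_ne_zero _ hp.ne_zero⟩
  by_contra hcon
  obtain ⟨A, hA, B, hB, C, hC, hAB, hAC, hBC⟩ := Finset.two_lt_card.1 (not_le.1 hcon)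
  obtain ⟨hG, -, hD⟩ := hP
  have dAB : Disjoint A B := hD hA hB hAB
  have dAC : Disjoint A C := hD hA hC hAC
  have dBC : Disjoint B C := hD hB hC hBC
  have eA : (B ∪ C).ncard ≤ Aᶜ.ncard := Set.ncard_le_ncard
    (Set.union_subset dAB.subset_compl_left dAC.subset_compl_left) (Set.toFinite _)
  have eB : (A ∪ C).ncard ≤ Bᶜ.ncard := Set.ncard_le_ncard
    (Set.union_subset dAB.subset_compl_right dBC.subset_compl_left) (Set.toFinite _)
  have eC : (A ∪ B).ncard ≤ Cᶜ.ncard := Set.ncard_le_ncard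
    (Set.union_subset dAC.subset_compl_right dBC.subset_compl_right) (Set.toFinite _)
  rw [Set.ncard_union_eq dBC] at eA
  rw [Set.ncard_union_eq dAC] at eB
  rw [Set.ncard_union_eq dAB] at eC
  have hA' := gda_half p n hp hn hp3 A (hG A hA)
  have hB' := gda_half p n hp hn hp3 B (hG B hB)
  have hC' := gda_half p n hp hn hp3 C (hG C hC)
  have : 0 < A.ncard := (Set.ncard_pos (Set.toFinite _)).2 (hG A hA).1.1
  omega

/-- For a prime `p` and `n ≥ 3`: if `p = 2` then `Γ(ℤ_{p^n})` is not
partitionable into global defensive alliances; if `p ≥ 3` then it is partitionable and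
`ψ_g(Γ(ℤ_{p^n})) = 2`. -/
theorem stmt3 (p n : ℕ) (hp : p.Prime) (hn : 3 ≤ n) :
    (p = 2 → ¬ PartitionableGDA (zdGraph (ZMod (p ^ n)))) ∧
    (3 ≤ p → PartitionableGDA (zdGraph (ZMod (p ^ n))) ∧
      psiG (zdGraph (ZMod (p ^ n))) = 2) := by
  constructor
  · rintro rfl
    exact part_two n hn
  · intro hp3
    have h : psiG (zdGraph (ZMod (p ^ n))) = 2 := by
      obtain ⟨P, hP, hc⟩ := exists_two p n hp hn hp3
      have hub : ∀ m ∈ {m : ℕ | ∃ P : Finset (Set (ZDV (ZMod (p ^ n)))),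
          IsGDAPartition (zdGraph (ZMod (p ^ n))) P ∧ P.card = m}, m ≤ 2 := by
        rintro m ⟨Q, hQ, rfl⟩
        exact card_le_two p n hp hn hp3 Q hQ
      exact le_antisymm (csSup_le ⟨2, P, hP, hc⟩ hub) (le_csSup ⟨2, hub⟩ ⟨P, hP, hc⟩)
    exact ⟨le_of_eq h.symm, h⟩
end

section
/- Let F and K be finite fields with |F| ≥ 3 and |K| ≥ 3. Then Γ(F × K) is partitionable into global defensive alliances, and ψ_g(Γ(F × K)) = 3 if |F| = |K| = 4, while ψ_g(Γ(F × K)) = 2 otherwise. -/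
open Classical

section Helpers

variable {V : Type*} [Finite V] {G : SimpleGraph V} {A : Set V}

/-- `G` is complete bipartite with sides `A`, `Aᶜ`. -/
def CB (G : SimpleGraph V) (A : Set V) : Prop := ∀ u v, G.Adj u v ↔ ¬ (u ∈ A ↔ v ∈ A)

omit [Finite V] in
lemma CB.compl (h : CB G A) : CB G Aᶜ := by
  intro u v
  rw [h u v]
  simp only [Set.mem_compl_iff]
  tauto

omit [Finite V] in
lemma CB.degIn_mem (h : CB G A) (S : Set V) {v : V} (hv : v ∈ A) :
    degIn G S v = (S ∩ Aᶜ).ncard := by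
  unfold degIn
  congr 1
  ext u
  simp [h v u, hv]

omit [Finite V] in
lemma CB.degIn_not_mem (h : CB G A) (S : Set V) {v : V} (hv : v ∉ A) :
    degIn G S v = (S ∩ A).ncard := by
  unfold degIn
  congr 1
  ext u
  simp [h v u, hv]

lemma card_split (S A : Set V) : (S ∩ A).ncard + (Sᶜ ∩ A).ncard = A.ncard := by
  rw [Set.inter_comm S, Set.inter_comm Sᶜ, ← Set.sdiff_eq]
  exact Set.ncard_inter_add_ncard_sdiff_eq_ncard A S (Set.toFinite _)

lemma CB.gda (h : CB G A) {S : Set V} (h1 : (S ∩ A).Nonempty) (h2 : (S ∩ Aᶜ).Nonempty)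
    (h3 : A.ncard ≤ 2 * (S ∩ A).ncard + 1) (h4 : Aᶜ.ncard ≤ 2 * (S ∩ Aᶜ).ncard + 1) :
    IsGlobalDefensiveAlliance G S := by
  refine ⟨⟨h1.mono Set.inter_subset_left, ?_⟩, ?_⟩
  · intro v _
    have e1 := card_split S A
    have e2 := card_split S Aᶜ
    by_cases hA : v ∈ A
    · rw [h.degIn_mem _ hA, h.degIn_mem _ hA]; omega
    · rw [h.degIn_not_mem _ hA, h.degIn_not_mem _ hA]; omega
  · intro v _
    by_cases hA : v ∈ A
    · obtain ⟨u, hu, hu'⟩ := h2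
      exact ⟨u, hu, (h v u).2 (by simp_all)⟩
    · obtain ⟨u, hu, hu'⟩ := h1
      exact ⟨u, hu, (h v u).2 (by simp_all)⟩

lemma CB.of_gda (h : CB G A) (hm : 2 ≤ A.ncard) (hn : 2 ≤ Aᶜ.ncard) {S : Set V}
    (hS : IsGlobalDefensiveAlliance G S) :
    1 ≤ (S ∩ A).ncard ∧ A.ncard ≤ 2 * (S ∩ A).ncard + 1 := by
  obtain ⟨⟨⟨w, hw⟩, hd⟩, _⟩ := hS
  have e1 := card_split S A
  have e2 := card_split S Aᶜ
  have key : ∃ v ∈ S, v ∉ A := by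
    by_cases hA : w ∈ A
    · have := hd w hw
      rw [h.degIn_mem _ hA, h.degIn_mem _ hA] at this
      have : (S ∩ Aᶜ).ncard ≠ 0 := by omega
      obtain ⟨v, hv, hv'⟩ := Set.nonempty_of_ncard_ne_zero this
      exact ⟨v, hv, hv'⟩
    · exact ⟨w, hw, hA⟩
  obtain ⟨v, hv, hv'⟩ := key
  have := hd v hv
  rw [h.degIn_not_mem _ hv', h.degIn_not_mem _ hv'] at this
  omega

lemma sum_le {P : Finset (Set V)} (hP : (P : Set (Set V)).Pairwise Disjoint) (A : Set V) :
    ∑ S ∈ P, (S ∩ A).ncard ≤ A.ncard := by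
  induction P using Finset.induction_on generalizing A with
  | empty => simp
  | insert S P hS ih =>
    rw [Finset.sum_insert hS]
    have e := card_split S A
    have := ih (hP.mono (by simp)) (Sᶜ ∩ A)
    have e3 : ∑ T ∈ P, (T ∩ (Sᶜ ∩ A)).ncard = ∑ T ∈ P, (T ∩ A).ncard := by
      refine Finset.sum_congr rfl fun T hT => ?_
      congr 1
      have hd : Disjoint S T := hP (by simp) (by simp [hT]) (by rintro rfl; exact hS hT)
      ext x
      have := fun hx : x ∈ S => (Set.disjoint_left.1 hd) hx
      simp only [Set.mem_inter_iff, Set.mem_compl_iff]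
      tauto
    omega

lemma CB.bound (h : CB G A) (hm : 2 ≤ A.ncard) (hn : 2 ≤ Aᶜ.ncard) {P : Finset (Set V)}
    (hP : IsGDAPartition G P) : P.card ≤ 2 ∨ (P.card ≤ 3 ∧ A.ncard = 3) := by
  have hs := sum_le hP.2.2 A
  have h1 : P.card * 1 ≤ ∑ S ∈ P, (S ∩ A).ncard := by
    rw [← smul_eq_mul]
    exact Finset.card_nsmul_le_sum _ _ _ fun S hS => (h.of_gda hm hn (hP.1 S hS)).1
  have h2 : P.card * (A.ncard - 1) ≤ ∑ S ∈ P, 2 * (S ∩ A).ncard := by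
    rw [← smul_eq_mul]
    refine Finset.card_nsmul_le_sum _ _ _ fun S hS => ?_
    have := (h.of_gda hm hn (hP.1 S hS)).2
    omega
  rw [← Finset.mul_sum] at h2
  by_cases hk : P.card ≤ 2
  · exact Or.inl hk
  · have h3 : 3 * (A.ncard - 1) ≤ P.card * (A.ncard - 1) := Nat.mul_le_mul_right _ (by omega)
    omega

lemma exists_half (A : Set V) (hA : 2 ≤ A.ncard) : ∃ B ⊆ A, 1 ≤ B.ncard ∧ 1 ≤ (A \ B).ncard ∧
    A.ncard ≤ 2 * B.ncard + 1 ∧ A.ncard ≤ 2 * (A \ B).ncard + 1 := by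
  obtain ⟨B, hB, hc⟩ := Set.exists_subset_card_eq (s := A) (n := A.ncard / 2) (by omega)
  have := Set.ncard_sdiff_add_ncard_of_subset hB (Set.toFinite _)
  exact ⟨B, hB, by omega, by omega, by omega, by omega⟩

lemma CB.two (h : CB G A) (hm : 2 ≤ A.ncard) (hn : 2 ≤ Aᶜ.ncard) :
    ∃ P : Finset (Set V), IsGDAPartition G P ∧ P.card = 2 := by
  obtain ⟨B, hB, b1, b2, b3, b4⟩ := exists_half A hm
  obtain ⟨C, hC, c1, c2, c3, c4⟩ := exists_half Aᶜ hn
  have i1 : (B ∪ C) ∩ A = B := by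
    ext x; have := @hB x; have := @hC x
    simp only [Set.mem_inter_iff, Set.mem_union, Set.mem_compl_iff] at *; tauto
  have i2 : (B ∪ C) ∩ Aᶜ = C := by
    ext x; have := @hB x; have := @hC x
    simp only [Set.mem_inter_iff, Set.mem_union, Set.mem_compl_iff] at *; tauto
  have i3 : (B ∪ C)ᶜ ∩ A = A \ B := by
    ext x; have := @hB x; have := @hC x
    simp only [Set.mem_inter_iff, Set.mem_union, Set.mem_compl_iff, Set.mem_sdiff] at *; tauto
  have i4 : (B ∪ C)ᶜ ∩ Aᶜ = Aᶜ \ C := by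
    ext x; have := @hB x; have := @hC x
    simp only [Set.mem_inter_iff, Set.mem_union, Set.mem_compl_iff, Set.mem_sdiff] at *; tauto
  have hne : (B ∪ C) ≠ (B ∪ C)ᶜ := by
    obtain ⟨x, hx⟩ := Set.nonempty_of_ncard_ne_zero (s := B) (by omega)
    intro he
    have h1 : x ∈ B ∪ C := Or.inl hx
    have h2 := h1
    rw [he] at h2
    exact h2 h1
  refine ⟨{B ∪ C, (B ∪ C)ᶜ}, ⟨?_, ?_, ?_⟩, Finset.card_pair hne⟩
  · intro S hS
    rw [Finset.mem_insert, Finset.mem_singleton] at hS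
    rcases hS with rfl | rfl
    · exact h.gda (Set.nonempty_of_ncard_ne_zero (by rw [i1]; omega))
        (Set.nonempty_of_ncard_ne_zero (by rw [i2]; omega)) (by rw [i1]; omega) (by rw [i2]; omega)
    · exact h.gda (Set.nonempty_of_ncard_ne_zero (by rw [i3]; omega))
        (Set.nonempty_of_ncard_ne_zero (by rw [i4]; omega)) (by rw [i3]; omega) (by rw [i4]; omega)
  · rw [Finset.coe_pair, Set.sUnion_pair, Set.union_compl_self]
  · rw [Finset.coe_pair, Set.pairwise_pair_of_symm]
    exact fun _ => disjoint_compl_right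

lemma CB.three (h : CB G A) (hm : A.ncard = 3) (hn : Aᶜ.ncard = 3) :
    ∃ P : Finset (Set V), IsGDAPartition G P ∧ P.card = 3 := by
  have f : Fin 3 ≃ A := (Finite.equivFinOfCardEq (α := A) (n := 3) hm).symm
  have g : Fin 3 ≃ (Aᶜ : Set V) := (Finite.equivFinOfCardEq (α := (Aᶜ : Set V)) (n := 3) hn).symm
  let S : Fin 3 → Set V := fun i => {(f i : V), (g i : V)}
  have hfg : ∀ i j, (f i : V) ≠ g j := fun i j he => (g j).2 (he ▸ (f i).2)
  have hdis : ∀ i j, i ≠ j → Disjoint (S i) (S j) := by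
    intro i j hij
    rw [Set.disjoint_left]
    rintro x (rfl | rfl) (hx | hx)
    · exact hij (f.injective (Subtype.ext hx))
    · exact hfg _ _ hx
    · exact hfg _ _ hx.symm
    · exact hij (g.injective (Subtype.ext hx))
  have hinj : Function.Injective S := by
    intro i j he
    by_contra hij
    have := (Set.disjoint_left.1 (hdis i j hij)) (show (f i : V) ∈ S i from Or.inl rfl)
    rw [← he] at this
    exact this (Or.inl rfl)
  have i1 : ∀ i, S i ∩ A = {(f i : V)} := by
    intro i
    ext x
    constructor
    · rintro ⟨rfl | rfl, hx⟩
      · rfl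
      · exact absurd hx (g i).2
    · rintro rfl
      exact ⟨Or.inl rfl, (f i).2⟩
  have i2 : ∀ i, S i ∩ Aᶜ = {(g i : V)} := by
    intro i
    ext x
    constructor
    · rintro ⟨rfl | rfl, hx⟩
      · exact absurd (f i).2 hx
      · rfl
    · rintro rfl
      exact ⟨Or.inr rfl, (g i).2⟩
  refine ⟨Finset.univ.image S, ⟨?_, ?_, ?_⟩, ?_⟩
  · intro T hT
    obtain ⟨i, -, rfl⟩ := Finset.mem_image.1 hT
    refine h.gda ?_ ?_ ?_ ?_
    · rw [i1]; exact Set.singleton_nonempty _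
    · rw [i2]; exact Set.singleton_nonempty _
    · rw [i1, Set.ncard_singleton]; omega
    · rw [i2, Set.ncard_singleton]; omega
  · rw [Set.eq_univ_iff_forall]
    intro x
    by_cases hx : x ∈ A
    · exact ⟨S (f.symm ⟨x, hx⟩), by simp, Or.inl (by simp)⟩
    · exact ⟨S (g.symm ⟨x, hx⟩), by simp, Or.inr (by simp)⟩
  · intro T hT U hU hne
    obtain ⟨i, -, rfl⟩ := Finset.mem_image.1 hT
    obtain ⟨j, -, rfl⟩ := Finset.mem_image.1 hU
    exact hdis i j (by rintro rfl; exact hne rfl)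
  · rw [Finset.card_image_of_injective _ hinj]; simp

lemma CB.main (h : CB G A) (hm : 2 ≤ A.ncard) (hn : 2 ≤ Aᶜ.ncard) :
    psiG G = if A.ncard = 3 ∧ Aᶜ.ncard = 3 then 3 else 2 := by
  unfold psiG
  refine IsGreatest.csSup_eq ⟨?_, ?_⟩
  · split_ifs with hc
    · exact h.three hc.1 hc.2
    · exact h.two hm hn
  · rintro k ⟨P, hP, rfl⟩
    have b1 := h.bound hm hn hP
    have b2 := h.compl.bound hn (by rwa [compl_compl]) hP
    split_ifs with hc <;> omega

end Helpers

lemma zd_cases {F K : Type*} [Field F] [Field K] (v : ZDV (F × K)) :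
    (v.1.1 ≠ 0 ∧ v.1.2 = 0) ∨ (v.1.1 = 0 ∧ v.1.2 ≠ 0) := by
  obtain ⟨⟨a, b⟩, h0, ⟨c, d⟩, h1, h2⟩ := v
  have h0' := h0
  have h1' := h1
  have h2' := h2
  simp only [Prod.mk_mul_mk, ne_eq, Prod.mk_eq_zero, mul_eq_zero] at h0' h1' h2'
  change (a ≠ 0 ∧ b = 0) ∨ (a = 0 ∧ b ≠ 0)
  tauto

lemma card_ne_zero_set (F : Type*) [Field F] [Finite F] :
    Nat.card {x : F // x ≠ 0} = Nat.card F - 1 := by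
  have := Set.ncard_compl ({0} : Set F)
  rw [Set.ncard_singleton] at this
  exact this

lemma zd_card {F K : Type*} [Field F] [Finite F] [Field K] [Finite K] :
    ({v : ZDV (F × K) | v.1.2 = 0} : Set _).ncard = Nat.card F - 1 := by
  rw [← card_ne_zero_set, ← Nat.card_coe_set_eq]
  refine Nat.card_congr ⟨fun v => ⟨v.1.1.1, ?_⟩,
    fun x => ⟨⟨(x.1, 0), ?_, (0, 1), ?_, ?_⟩, ?_⟩, ?_, ?_⟩
  · rcases zd_cases v.1 with h | h
    · exact h.1
    · exact absurd v.2 h.2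
  · simp [x.2]
  · simp
  · simp
  · simp
  · rintro ⟨⟨⟨a, b⟩, h⟩, hb⟩
    have hb' : b = 0 := hb
    subst hb'
    rfl
  · rintro ⟨x, hx⟩
    rfl

lemma zd_card' {F K : Type*} [Field F] [Finite F] [Field K] [Finite K] :
    ({v : ZDV (F × K) | v.1.2 = 0}ᶜ : Set _).ncard = Nat.card K - 1 := by
  rw [← card_ne_zero_set, ← Nat.card_coe_set_eq]
  refine Nat.card_congr ⟨fun v => ⟨v.1.1.2, v.2⟩,
    fun x => ⟨⟨(0, x.1), ?_, (1, 0), ?_, ?_⟩, ?_⟩, ?_, ?_⟩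
  · simp [x.2]
  · simp
  · simp
  · simp [x.2]
  · rintro ⟨v, hb⟩
    rcases zd_cases v with h | h
    · exact absurd h.2 hb
    · exact Subtype.ext (Subtype.ext (Prod.ext h.1.symm rfl))
  · rintro ⟨x, hx⟩
    rfl

lemma zd_CB {F K : Type*} [Field F] [Field K] :
    CB (zdGraph (F × K)) {v : ZDV (F × K) | v.1.2 = 0} := by
  intro u v
  have hu := zd_cases u
  have hv := zd_cases v
  have e : (u.1 * v.1 = 0) ↔ (u.1.1 = 0 ∨ v.1.1 = 0) ∧ (u.1.2 = 0 ∨ v.1.2 = 0) := by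
    rw [Prod.ext_iff]; simp
  change (u ≠ v ∧ u.1 * v.1 = 0) ↔ ¬ (u.1.2 = 0 ↔ v.1.2 = 0)
  rw [e]
  by_cases huv : u = v
  · subst huv; simp
  · tauto

/-- For finite fields `F`, `K` with `|F|, |K| ≥ 3`, `Γ(F × K)` is
partitionable into global defensive alliances, and `ψ_g(Γ(F × K)) = 3` if
`|F| = |K| = 4`, while `ψ_g(Γ(F × K)) = 2` otherwise. -/
theorem stmt8 (F K : Type*) [Field F] [Finite F] [Field K] [Finite K]
    (hF : 3 ≤ Nat.card F) (hK : 3 ≤ Nat.card K) :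
    PartitionableGDA (zdGraph (F × K)) ∧
    ((Nat.card F = 4 ∧ Nat.card K = 4) → psiG (zdGraph (F × K)) = 3) ∧
    (¬ (Nat.card F = 4 ∧ Nat.card K = 4) → psiG (zdGraph (F × K)) = 2) := by
  have hm := (zd_CB (F := F) (K := K)).main
    (by rw [zd_card]; omega) (by rw [zd_card']; omega)
  rw [zd_card, zd_card'] at hm
  unfold PartitionableGDA
  split_ifs at hm <;> omega
end

section
/- Let F be a finite field. (1) If |F| ≤ 4, then Γ(ℤ₂ × ℤ₂ × F) is partitionable into global defensive alliances and ψ_g(Γ(ℤ₂ × ℤ₂ × F)) = 2. (2) If |F| > 4, then Γ(ℤ₂ × ℤ₂ × F) is not partitionable into global defensive alliances. -/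
open Classical

abbrev RR (F : Type*) [Field F] := ZMod 2 × ZMod 2 × F

section
variable {F : Type*} [Field F]

def vA : ZDV (RR F) := ⟨(1, 0, 0), by simp, (0, 1, 0), by simp, by simp⟩
def vB : ZDV (RR F) := ⟨(0, 1, 0), by simp, (1, 0, 0), by simp, by simp⟩
def vD : ZDV (RR F) := ⟨(1, 1, 0), by simp, (0, 0, 1), by simp, by simp⟩
def vC (u : Fˣ) : ZDV (RR F) := ⟨(0, 0, (u : F)), by simp, (1, 0, 0), by simp, by simp⟩
def vE (u : Fˣ) : ZDV (RR F) := ⟨(0, 1, (u : F)), by simp, (1, 0, 0), by simp, by simp⟩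
def vG (u : Fˣ) : ZDV (RR F) := ⟨(1, 0, (u : F)), by simp, (0, 1, 0), by simp, by simp⟩

theorem zmod2 (x : ZMod 2) : x = 0 ∨ x = 1 := by
  revert x; decide

theorem v_cases (x : ZDV (RR F)) : x = vA ∨ x = vB ∨ x = vD ∨ (∃ u, x = vC u) ∨
    (∃ u, x = vE u) ∨ (∃ u, x = vG u) := by
  obtain ⟨⟨x, y, z⟩, hx, ⟨x', y', z'⟩, h1, h2⟩ := x
  by_cases hz : z = 0
  · subst hz
    rcases zmod2 x with rfl | rfl <;> rcases zmod2 y with rfl | rfl <;>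
      simp [vA, vB, vC, vD, vE, vG] at *
    exact hx rfl
  · have hu : ∃ u : Fˣ, z = u := ⟨Units.mk0 z hz, rfl⟩
    obtain ⟨u, rfl⟩ := hu
    rcases zmod2 x with rfl | rfl <;> rcases zmod2 y with rfl | rfl <;>
      simp [vA, vB, vC, vD, vE, vG] at *
    simp at h2
    exact h1 (by simp [h2])

theorem adjA (x : ZDV (RR F)) : (zdGraph (RR F)).Adj vA x ↔
    x = vB ∨ (∃ u, x = vC u) ∨ (∃ u, x = vE u) := by
  rcases v_cases x with rfl | rfl | rfl | ⟨u, rfl⟩ | ⟨u, rfl⟩ | ⟨u, rfl⟩ <;>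
    simp [zdGraph, vA, vB, vC, vD, vE, vG]

theorem adjB (x : ZDV (RR F)) : (zdGraph (RR F)).Adj vB x ↔
    x = vA ∨ (∃ u, x = vC u) ∨ (∃ u, x = vG u) := by
  rcases v_cases x with rfl | rfl | rfl | ⟨u, rfl⟩ | ⟨u, rfl⟩ | ⟨u, rfl⟩ <;>
    simp [zdGraph, vA, vB, vC, vD, vE, vG]

theorem adjD (x : ZDV (RR F)) : (zdGraph (RR F)).Adj vD x ↔ (∃ u, x = vC u) := by
  rcases v_cases x with rfl | rfl | rfl | ⟨u, rfl⟩ | ⟨u, rfl⟩ | ⟨u, rfl⟩ <;>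
    simp [zdGraph, vA, vB, vC, vD, vE, vG]

theorem adjC (w : Fˣ) (x : ZDV (RR F)) : (zdGraph (RR F)).Adj (vC w) x ↔
    x = vA ∨ x = vB ∨ x = vD := by
  rcases v_cases x with rfl | rfl | rfl | ⟨u, rfl⟩ | ⟨u, rfl⟩ | ⟨u, rfl⟩ <;>
    simp [zdGraph, vA, vB, vC, vD, vE, vG]

theorem adjE (w : Fˣ) (x : ZDV (RR F)) : (zdGraph (RR F)).Adj (vE w) x ↔ x = vA := by
  rcases v_cases x with rfl | rfl | rfl | ⟨u, rfl⟩ | ⟨u, rfl⟩ | ⟨u, rfl⟩ <;>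
    simp [zdGraph, vA, vB, vC, vD, vE, vG]

theorem adjG (w : Fˣ) (x : ZDV (RR F)) : (zdGraph (RR F)).Adj (vG w) x ↔ x = vB := by
  rcases v_cases x with rfl | rfl | rfl | ⟨u, rfl⟩ | ⟨u, rfl⟩ | ⟨u, rfl⟩ <;>
    simp [zdGraph, vA, vB, vC, vD, vE, vG]

theorem injC : Function.Injective (vC : Fˣ → ZDV (RR F)) := by
  intro u v h; simpa [vC, Units.ext_iff] using h
theorem injE : Function.Injective (vE : Fˣ → ZDV (RR F)) := by
  intro u v h; simpa [vE, Units.ext_iff] using h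
theorem injG : Function.Injective (vG : Fˣ → ZDV (RR F)) := by
  intro u v h; simpa [vG, Units.ext_iff] using h

/-- counting lemma for a vertex whose neighbours are one vertex and two families -/
theorem count3 [Finite F] {V : Type*} (G : SimpleGraph V) (S : Set V) (v b : V) (f g : Fˣ → V)
    (hf : Function.Injective f) (hg : Function.Injective g)
    (hbf : ∀ u, b ≠ f u) (hbg : ∀ u, b ≠ g u) (hfg : ∀ u w, f u ≠ g w)
    (hadj : ∀ x, G.Adj v x ↔ x = b ∨ (∃ u, x = f u) ∨ (∃ u, x = g u)) :
    degIn G S v = (if b ∈ S then 1 else 0) + (f ⁻¹' S).ncard + (g ⁻¹' S).ncard := by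
  have h : {u : V | u ∈ S ∧ G.Adj v u} =
      ((if b ∈ S then {b} else ∅) ∪ f '' (f ⁻¹' S)) ∪ g '' (g ⁻¹' S) := by
    ext x
    simp only [hadj, Set.mem_ofPred_eq, Set.mem_union, Set.mem_image, Set.mem_preimage]
    constructor
    · rintro ⟨hx, rfl | ⟨u, rfl⟩ | ⟨u, rfl⟩⟩
      · simp [hx]
      · exact Or.inl (Or.inr ⟨u, hx, rfl⟩)
      · exact Or.inr ⟨u, hx, rfl⟩
    · rintro ((hx | ⟨u, hx, rfl⟩) | ⟨u, hx, rfl⟩)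
      · split_ifs at hx with hb
        · rw [Set.mem_singleton_iff] at hx
          subst hx
          exact ⟨hb, Or.inl rfl⟩
        · exact hx.elim
      · exact ⟨hx, Or.inr (Or.inl ⟨u, rfl⟩)⟩
      · exact ⟨hx, Or.inr (Or.inr ⟨u, rfl⟩)⟩
  have hfin : ((if b ∈ S then {b} else ∅ : Set V)).Finite := by
    split_ifs <;> simp
  unfold degIn
  rw [h, Set.ncard_union_eq (hs := hfin.union (Set.toFinite _)) (ht := Set.toFinite _),
    Set.ncard_union_eq (hs := hfin) (ht := Set.toFinite _), Set.ncard_image_of_injective _ hf,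
    Set.ncard_image_of_injective _ hg]
  · split_ifs <;> simp
  · rw [Set.disjoint_left]
    rintro x hx ⟨u, _, rfl⟩
    split_ifs at hx
    · exact hbf u hx.symm
    · exact hx
  · rw [Set.disjoint_left]
    rintro x (hx | ⟨w, _, hw⟩) ⟨u, _, rfl⟩
    · split_ifs at hx
      · exact hbg u hx.symm
      · exact hx
    · exact hfg _ _ hw

theorem degA [Finite F] (S : Set (ZDV (RR F))) : degIn (zdGraph (RR F)) S vA =
    (if vB ∈ S then 1 else 0) + (vC ⁻¹' S).ncard + (vE ⁻¹' S).ncard :=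
  count3 _ _ _ _ _ _ injC injE (fun u hh => by simp [vB, vC] at hh) (fun u hh => by simp [vB, vE] at hh; exact u.ne_zero hh.symm)
    (by simp [vC, vE]) adjA

theorem degB [Finite F] (S : Set (ZDV (RR F))) : degIn (zdGraph (RR F)) S vB =
    (if vA ∈ S then 1 else 0) + (vC ⁻¹' S).ncard + (vG ⁻¹' S).ncard :=
  count3 _ _ _ _ _ _ injC injG (fun u => by simp [vA, vC]) (fun u hh => by simp [vA, vG] at hh; exact u.ne_zero hh.symm)
    (by simp [vC, vG]) adjB

theorem degD (S : Set (ZDV (RR F))) : degIn (zdGraph (RR F)) S vD = (vC ⁻¹' S).ncard := by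
  unfold degIn
  rw [← Set.ncard_image_of_injective (vC ⁻¹' S) injC]
  congr 1
  ext x
  simp only [adjD, Set.mem_ofPred_eq, Set.mem_image, Set.mem_preimage]
  constructor
  · rintro ⟨hx, u, rfl⟩
    exact ⟨u, hx, rfl⟩
  · rintro ⟨u, hx, rfl⟩
    exact ⟨hx, u, rfl⟩

theorem compl_count [Finite F] (f : Fˣ → ZDV (RR F)) (S : Set (ZDV (RR F))) :
    (f ⁻¹' S).ncard + (f ⁻¹' Sᶜ).ncard + 1 = Nat.card F := by
  rw [Set.preimage_compl, Set.ncard_add_ncard_compl]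
  have := Fintype.ofFinite F
  rw [Nat.card_units]
  have : 0 < Nat.card F := Nat.card_pos
  omega

theorem memE {S : Set (ZDV (RR F))} (h : IsDominatingSet (zdGraph (RR F)) S) (u : Fˣ) :
    vA ∈ S ∨ vE u ∈ S := by
  by_contra! hc
  obtain ⟨x, hx, hxa⟩ := h _ hc.2
  rw [adjE] at hxa
  exact hc.1 (hxa ▸ hx)

theorem memG {S : Set (ZDV (RR F))} (h : IsDominatingSet (zdGraph (RR F)) S) (u : Fˣ) :
    vB ∈ S ∨ vG u ∈ S := by
  by_contra! hc
  obtain ⟨x, hx, hxa⟩ := h _ hc.2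
  rw [adjG] at hxa
  exact hc.1 (hxa ▸ hx)

theorem card_le_four [Finite F] (S : Set (ZDV (RR F)))
    (hS : IsGlobalDefensiveAlliance (zdGraph (RR F)) S)
    (hT : IsGlobalDefensiveAlliance (zdGraph (RR F)) Sᶜ) (ha : vA ∈ S) : Nat.card F ≤ 4 := by
  have hE : vE ⁻¹' S = ∅ := by
    ext u
    have := memE hT.2 u
    simp_all
  have hc := compl_count vC S
  have he := compl_count vE S
  have hg := compl_count vG S
  have hA := hS.1.2 _ ha
  rw [degA, degA] at hA
  rw [hE, Set.ncard_empty] at hA he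
  have hF : 1 < Nat.card F := Finite.one_lt_card
  by_cases hb : vB ∈ S
  · simp only [hb, Set.mem_compl_iff, not_true, if_true, if_false] at hA
    rcases (vC ⁻¹' S).eq_empty_or_nonempty with h0 | ⟨u, hu⟩
    · rw [h0, Set.ncard_empty] at hA hc
      omega
    · have hd : vD ∈ Sᶜ := by
        obtain ⟨x, hx, hxa⟩ := hT.2 (vC u) (by simpa using hu)
        rw [adjC] at hxa
        rcases hxa with rfl | rfl | rfl
        · exact absurd ha hx
        · exact absurd hb hx
        · exact hx
      have hD := hT.1.2 _ hd
      rw [degD, degD, compl_compl] at hD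
      omega
  · have hG : vG ⁻¹' Sᶜ = ∅ := by
      ext u
      have := memG hS.2 u
      simp_all
    have hB := hT.1.2 vB hb
    rw [degB, degB, compl_compl] at hB
    rw [hG, Set.ncard_empty] at hB hg
    simp only [hb, ha, Set.mem_compl_iff, not_true, not_false_eq_true, if_true, if_false] at hA hB
    omega

theorem part_card_le (P : Finset (Set (ZDV (RR F)))) (hP : IsGDAPartition (zdGraph (RR F)) P) :
    P.card ≤ 2 := by
  have : P.card ≤ ({vA, vE 1} : Finset (ZDV (RR F))).card := by
    refine Finset.card_le_card_of_injOn (fun S => if vA ∈ S then vA else vE 1) ?_ ?_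
    · intro S _
      dsimp only
      split_ifs <;> simp
    · intro S hS T hT h
      by_contra hne
      have hd := Set.disjoint_left.1 (hP.2.2 hS hT hne)
      have h1 := memE (hP.1 S hS).2 1
      have h2 := memE (hP.1 T hT).2 1
      have hAE : (vA : ZDV (RR F)) ≠ vE 1 := by simp [vA, vE]
      dsimp only at h
      split_ifs at h with h3 h4 h4
      · exact hd h3 h4
      · exact hAE h
      · exact hAE h.symm
      · exact hd (h1.resolve_left h3) (h2.resolve_left h4)
  exact this.trans Finset.card_le_two

theorem bdd : BddAbove {n : ℕ | ∃ P : Finset (Set (ZDV (RR F))),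
    IsGDAPartition (zdGraph (RR F)) P ∧ P.card = n} :=
  ⟨2, by rintro n ⟨P, hP, rfl⟩; exact part_card_le P hP⟩

theorem card_of_partitionable [Finite F] (h : PartitionableGDA (zdGraph (RR F))) :
    Nat.card F ≤ 4 := by
  unfold PartitionableGDA psiG at h
  have hne : {n : ℕ | ∃ P : Finset (Set (ZDV (RR F))),
    IsGDAPartition (zdGraph (RR F)) P ∧ P.card = n}.Nonempty := by
    by_contra hc
    rw [Set.not_nonempty_iff_eq_empty] at hc
    rw [hc] at h
    simp at h
  obtain ⟨P, hP, hc⟩ := Nat.sSup_mem hne bdd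
  have hc2 : P.card = 2 := le_antisymm (part_card_le P hP) (hc ▸ h)
  obtain ⟨S, T, hST, rfl⟩ := Finset.card_eq_two.1 hc2
  have hS := hP.1 S (by simp)
  have hT := hP.1 T (by simp)
  have hd : Disjoint S T := hP.2.2 (by simp) (by simp) hST
  have hu : S ∪ T = Set.univ := by simpa using hP.2.1
  have hTc : T = Sᶜ := by
    have : IsCompl S T := ⟨hd, codisjoint_iff.2 hu⟩
    exact this.compl_eq.symm
  subst hTc
  by_cases ha : vA ∈ S
  · exact card_le_four S hS hT ha
  · exact card_le_four Sᶜ hT (by rwa [compl_compl]) ha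

theorem exists_C [Finite F] (h : Nat.card F ≤ 4) : ∃ C : Set Fˣ, C.Nonempty ∧
    Cᶜ.ncard ≤ 1 ∧ C.ncard ≤ Cᶜ.ncard + 1 := by
  have h0 : Nat.card Fˣ ≤ 3 := by
    have := Fintype.ofFinite F
    rw [Nat.card_units]; omega
  by_cases h1 : ∃ w : Fˣ, w ≠ 1
  · obtain ⟨w, hw⟩ := h1
    refine ⟨{w}ᶜ, ⟨1, fun h => hw (Eq.symm h)⟩, by simp, ?_⟩
    have := Set.ncard_add_ncard_compl ({w} : Set Fˣ)
    rw [compl_compl]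
    rw [Set.ncard_singleton] at *
    omega
  · push Not at h1
    have : (Set.univ : Set Fˣ) = {1} := by ext x; simp [h1 x]
    refine ⟨Set.univ, ⟨1, trivial⟩, by simp, ?_⟩
    rw [this]; simp

theorem exists_part [Finite F] (h : Nat.card F ≤ 4) : ∃ S : Set (ZDV (RR F)), 
    IsGlobalDefensiveAlliance (zdGraph (RR F)) S ∧
    IsGlobalDefensiveAlliance (zdGraph (RR F)) Sᶜ := by
  obtain ⟨C, ⟨w, hw⟩, hC1, hC2⟩ := exists_C h
  let S : Set (ZDV (RR F)) := {vA, vB} ∪ vC '' C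
  have a1 : vA ∈ S := by simp [S]
  have b1 : vB ∈ S := by simp [S]
  have d1 : vD ∉ S := by simp [S, vA, vB, vC, vD]
  have e1 : ∀ u, vE u ∉ S := by simp [S, vA, vB, vC, vE]
  have g1 : ∀ u, vG u ∉ S := by simp [S, vA, vB, vC, vG]
  have c1 : ∀ u, vC u ∈ S ↔ u ∈ C := by
    intro u
    have : ∀ v : Fˣ, (vC v : ZDV (RR F)) = vC u ↔ v = u := fun v => injC.eq_iff
    simp only [S, Set.mem_union, Set.mem_image, this]
    simp [vA, vB, vC]
  clear_value S
  have pc : vC ⁻¹' S = C := by ext u; simp [c1]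
  have pe : vE ⁻¹' S = ∅ := by ext u; simp [e1]
  have pg : vG ⁻¹' S = ∅ := by ext u; simp [g1]
  have hCC := Set.ncard_add_ncard_compl C
  have hCpos : 0 < C.ncard := (Set.ncard_pos (Set.toFinite _)).2 ⟨w, hw⟩
  refine ⟨S, ⟨⟨⟨_, a1⟩, ?_⟩, ?_⟩, ⟨⟨⟨_, d1⟩, ?_⟩, ?_⟩⟩
  · intro v hv
    rcases v_cases v with rfl | rfl | rfl | ⟨u, rfl⟩ | ⟨u, rfl⟩ | ⟨u, rfl⟩
    · rw [degA, degA, Set.preimage_compl, Set.preimage_compl, pc, pe]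
      simp [b1]; omega
    · rw [degB, degB, Set.preimage_compl, Set.preimage_compl, pc, pg]
      simp [a1]; omega
    · exact absurd hv d1
    · have : degIn (zdGraph (RR F)) Sᶜ (vC u) ≤ 1 := by
        unfold degIn
        rw [← Set.ncard_singleton (vD : ZDV (RR F))]
        refine Set.ncard_le_ncard ?_ (Set.toFinite _)
        rintro x ⟨hx, hxa⟩
        rw [adjC] at hxa
        rcases hxa with rfl | rfl | rfl
        · exact absurd a1 hx
        · exact absurd b1 hx
        · rfl
      omega
    · exact absurd hv (e1 u)
    · exact absurd hv (g1 u)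
  · intro v hv
    rcases v_cases v with rfl | rfl | rfl | ⟨u, rfl⟩ | ⟨u, rfl⟩ | ⟨u, rfl⟩
    · exact absurd a1 hv
    · exact absurd b1 hv
    · exact ⟨vC w, (c1 w).2 hw, (adjD _).2 ⟨w, rfl⟩⟩
    · exact ⟨vA, a1, (adjC _ _).2 (Or.inl rfl)⟩
    · exact ⟨vA, a1, (adjE _ _).2 rfl⟩
    · exact ⟨vB, b1, (adjG _ _).2 rfl⟩
  · intro v hv
    rw [compl_compl]
    rcases v_cases v with rfl | rfl | rfl | ⟨u, rfl⟩ | ⟨u, rfl⟩ | ⟨u, rfl⟩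
    · exact absurd a1 hv
    · exact absurd b1 hv
    · rw [degD, degD, Set.preimage_compl, pc]
      exact hC2
    · have h1 : degIn (zdGraph (RR F)) S (vC u) ≤ 2 := by
        unfold degIn
        refine (Set.ncard_le_ncard (t := {vA, vB}) ?_ (Set.toFinite _)).trans (Set.ncard_insert_le _ _ |>.trans (by simp))
        rintro x ⟨hx, hxa⟩
        rw [adjC] at hxa
        rcases hxa with rfl | rfl | rfl
        · simp
        · simp
        · exact absurd hx d1
      have h2 : 0 < degIn (zdGraph (RR F)) Sᶜ (vC u) :=
        (Set.ncard_pos (Set.toFinite _)).2 ⟨vD, d1, (adjC _ _).2 (Or.inr (Or.inr rfl))⟩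
      omega
    · have h1 : degIn (zdGraph (RR F)) S (vE u) ≤ 1 := by
        unfold degIn
        rw [← Set.ncard_singleton (vA : ZDV (RR F))]
        refine Set.ncard_le_ncard ?_ (Set.toFinite _)
        rintro x ⟨hx, hxa⟩
        exact (adjE _ _).1 hxa
      omega
    · have h1 : degIn (zdGraph (RR F)) S (vG u) ≤ 1 := by
        unfold degIn
        rw [← Set.ncard_singleton (vB : ZDV (RR F))]
        refine Set.ncard_le_ncard ?_ (Set.toFinite _)
        rintro x ⟨hx, hxa⟩
        exact (adjG _ _).1 hxa
      omega
  · intro v hv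
    rw [Set.mem_compl_iff, not_not] at hv
    rcases v_cases v with rfl | rfl | rfl | ⟨u, rfl⟩ | ⟨u, rfl⟩ | ⟨u, rfl⟩
    · exact ⟨vE 1, e1 1, (adjA _).2 (Or.inr (Or.inr ⟨1, rfl⟩))⟩
    · exact ⟨vG 1, g1 1, (adjB _).2 (Or.inr (Or.inr ⟨1, rfl⟩))⟩
    · exact absurd hv d1
    · exact ⟨vD, d1, (adjC _ _).2 (Or.inr (Or.inr rfl))⟩
    · exact absurd hv (e1 u)
    · exact absurd hv (g1 u)

theorem psi_eq [Finite F] (h : Nat.card F ≤ 4) : psiG (zdGraph (RR F)) = 2 := by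
  obtain ⟨S, hS, hT⟩ := exists_part h
  have hne : S ≠ Sᶜ := fun hh => by
    obtain ⟨x, hx⟩ := hS.1.1
    have hx2 := hx
    rw [hh] at hx2
    exact hx2 hx
  have hmem : 2 ∈ {n : ℕ | ∃ P : Finset (Set (ZDV (RR F))),
      IsGDAPartition (zdGraph (RR F)) P ∧ P.card = n} := by
    refine ⟨{S, Sᶜ}, ⟨?_, ?_, ?_⟩, Finset.card_pair hne⟩
    · intro X hX
      rw [Finset.mem_insert, Finset.mem_singleton] at hX
      rcases hX with rfl | rfl
      · exact hS
      · exact hT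
    · simp
    · rw [Finset.coe_pair]
      exact (Set.pairwise_pair_of_symm).2
        (fun _ => disjoint_compl_right)
  refine le_antisymm (csSup_le ⟨2, hmem⟩ ?_) (le_csSup bdd hmem)
  rintro n ⟨P, hP, rfl⟩
  exact part_card_le P hP

end

/-- For a finite field `F`: if `|F| ≤ 4` then `Γ(ℤ₂ × ℤ₂ × F)` is
partitionable into global defensive alliances with `ψ_g = 2`; if `|F| > 4` then it is
not partitionable. -/
theorem stmt12 (F : Type*) [Field F] [Finite F] :
    (Nat.card F ≤ 4 →
      PartitionableGDA (zdGraph (ZMod 2 × ZMod 2 × F)) ∧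
      psiG (zdGraph (ZMod 2 × ZMod 2 × F)) = 2) ∧
    (4 < Nat.card F → ¬ PartitionableGDA (zdGraph (ZMod 2 × ZMod 2 × F))) := by
  refine ⟨fun h => ⟨(psi_eq h).ge, psi_eq h⟩, fun h hp => ?_⟩
  have := card_of_partitionable (F := F) hp
  omega
end

section
/- Let F and K be finite fields with |F| ≥ 3 and |K| ≥ 3. Then Γ(ℤ₂ × F × K) is not partitionable into global defensive alliances. -/
open Classical

namespace Stmt14

lemma gda_hit {V : Type*} [Finite V] (G : SimpleGraph V) (T : Set V)
    (hT : IsGlobalDefensiveAlliance G T) (d : V) {ι : Type*} [Finite ι] (c : ι → V)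
    (hc : Function.Injective c) (hι : 2 ≤ Nat.card ι)
    (hadj : ∀ u, G.Adj d u ↔ ∃ i, c i = u) : ∃ i, c i ∈ T := by
  by_contra! hno
  by_cases hd : d ∈ T
  · have h := hT.1.2 d hd
    have h0 : degIn G T d = 0 := by
      unfold degIn
      rw [Set.ncard_eq_zero]
      ext u
      simp only [Set.mem_ofPred_eq, Set.mem_empty_iff_false, iff_false, not_and, hadj]
      rintro hu ⟨i, rfl⟩
      exact hno i hu
    have h1 : Nat.card ι ≤ degIn G Tᶜ d := by
      unfold degIn
      rw [← Set.ncard_univ, ← Set.ncard_image_of_injective _ hc]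
      apply Set.ncard_le_ncard _ (Set.toFinite _)
      rintro _ ⟨i, -, rfl⟩
      exact ⟨hno i, (hadj _).2 ⟨i, rfl⟩⟩
    omega
  · obtain ⟨u, hu, hdu⟩ := hT.2 d hd
    obtain ⟨i, rfl⟩ := (hadj u).1 hdu
    exact hno i hu

variable (F K : Type*) [Field F] [Field K]

def vE : ZDV (ZMod 2 × F × K) :=
  ⟨(1, 0, 0), by simp, (0, 1, 1), by simp, by simp⟩

variable {F K}

def vB (a : Fˣ) : ZDV (ZMod 2 × F × K) :=
  ⟨(0, a, 0), by simp, (1, 0, 0), by simp, by simp⟩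

def vC (b : Kˣ) : ZDV (ZMod 2 × F × K) :=
  ⟨(0, 0, b), by simp, (1, 0, 0), by simp, by simp⟩

def vH (p : Fˣ × Kˣ) : ZDV (ZMod 2 × F × K) :=
  ⟨(0, p.1, p.2), by simp, (1, 0, 0), by simp, by simp⟩

variable (F K)

def vD : ZDV (ZMod 2 × F × K) :=
  ⟨(1, 1, 0), by simp, (0, 0, 1), by simp, by simp⟩

def vG : ZDV (ZMod 2 × F × K) :=
  ⟨(1, 0, 1), by simp, (0, 1, 0), by simp, by simp⟩

variable {F K}

lemma vB_inj : Function.Injective (vB : Fˣ → ZDV (ZMod 2 × F × K)) := by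
  intro a b h
  simpa [vB, Units.ext_iff] using h

lemma vC_inj : Function.Injective (vC : Kˣ → ZDV (ZMod 2 × F × K)) := by
  intro a b h
  simpa [vC, Units.ext_iff] using h

lemma vH_inj : Function.Injective (vH : Fˣ × Kˣ → ZDV (ZMod 2 × F × K)) := by
  rintro ⟨a, b⟩ ⟨c, d⟩ h
  simpa [vH, Units.ext_iff] using h

lemma adjD (u : ZDV (ZMod 2 × F × K)) :
    (zdGraph (ZMod 2 × F × K)).Adj (vD F K) u ↔ ∃ i : Kˣ, vC i = u := by
  obtain ⟨⟨x, y, z⟩, h0, h1⟩ := u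
  constructor
  · rintro ⟨-, h⟩
    simp [vD] at h
    obtain ⟨rfl, rfl⟩ := h
    have hz : z ≠ 0 := by simpa using h0
    exact ⟨Units.mk0 z hz, by simp [vC]⟩
  · rintro ⟨i, h⟩
    rw [← h]
    exact ⟨by simp [vD, vC], by simp [vD, vC]⟩

lemma adjG (u : ZDV (ZMod 2 × F × K)) :
    (zdGraph (ZMod 2 × F × K)).Adj (vG F K) u ↔ ∃ i : Fˣ, vB i = u := by
  obtain ⟨⟨x, y, z⟩, h0, h1⟩ := u
  constructor
  · rintro ⟨-, h⟩
    simp [vG] at h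
    obtain ⟨rfl, rfl⟩ := h
    have hz : y ≠ 0 := by simpa using h0
    exact ⟨Units.mk0 y hz, by simp [vB]⟩
  · rintro ⟨i, h⟩
    rw [← h]
    exact ⟨by simp [vG, vB], by simp [vG, vB]⟩

lemma adjE (u : ZDV (ZMod 2 × F × K)) (h : (zdGraph (ZMod 2 × F × K)).Adj (vE F K) u) :
    (∃ i, vB i = u) ∨ (∃ i, vC i = u) ∨ ∃ p, vH p = u := by
  obtain ⟨⟨x, y, z⟩, h0, h1⟩ := u
  obtain ⟨-, h⟩ := h
  simp [vE] at h
  subst h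
  by_cases hy : y = 0
  · subst hy
    have hz : z ≠ 0 := by simpa using h0
    exact Or.inr (Or.inl ⟨Units.mk0 z hz, by simp [vC]⟩)
  · by_cases hz : z = 0
    · subst hz
      exact Or.inl ⟨Units.mk0 y hy, by simp [vB]⟩
    · exact Or.inr (Or.inr ⟨(Units.mk0 y hy, Units.mk0 z hz), by simp [vH]⟩)

lemma adjEH (p : Fˣ × Kˣ) : (zdGraph (ZMod 2 × F × K)).Adj (vE F K) (vH p) :=
  ⟨by simp [vE, vH], by simp [vE, vH]⟩

lemma adjH (p : Fˣ × Kˣ) (u : ZDV (ZMod 2 × F × K))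
    (h : (zdGraph (ZMod 2 × F × K)).Adj (vH p) u) : u = vE F K := by
  obtain ⟨⟨x, y, z⟩, h0, h1⟩ := u
  obtain ⟨-, h⟩ := h
  simp [vH] at h
  obtain ⟨rfl, rfl⟩ := h
  have hx : x ≠ 0 := by simpa using h0
  have : x = 1 := (by decide : ∀ x : ZMod 2, x ≠ 0 → x = 1) x hx
  subst this
  simp [vE]

lemma no_two [Finite F] [Finite K] (hF : 3 ≤ Nat.card F) (hK : 3 ≤ Nat.card K)
    (S T : Set (ZDV (ZMod 2 × F × K)))
    (hS : IsGlobalDefensiveAlliance (zdGraph (ZMod 2 × F × K)) S)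
    (hT : IsGlobalDefensiveAlliance (zdGraph (ZMod 2 × F × K)) T)
    (hd : Disjoint S T) (hE : vE F K ∈ S) : False := by
  have hf : Nat.card Fˣ = Nat.card F - 1 := Nat.card_units F
  have hk : Nat.card Kˣ = Nat.card K - 1 := Nat.card_units K
  have hf2 : 2 ≤ Nat.card Fˣ := by omega
  have hk2 : 2 ≤ Nat.card Kˣ := by omega
  obtain ⟨c, hc⟩ := gda_hit _ T hT (vD F K) vC vC_inj hk2 adjD
  obtain ⟨b, hb⟩ := gda_hit _ T hT (vG F K) vB vB_inj hf2 adjG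
  have hST : ∀ x, x ∈ S → x ∉ T := fun x h1 h2 => Set.disjoint_left.1 hd h1 h2
  have hH : ∀ p, vH p ∈ T := by
    intro p
    by_contra hp
    obtain ⟨u, hu, hadj⟩ := hT.2 _ hp
    rw [adjH p u hadj] at hu
    exact hST _ hE hu
  have h := hS.1.2 _ hE
  have h1 : Nat.card Fˣ * Nat.card Kˣ ≤ degIn (zdGraph (ZMod 2 × F × K)) Sᶜ (vE F K) := by
    unfold degIn
    rw [← Nat.card_prod, ← Set.ncard_univ,
      ← Set.ncard_image_of_injective _ (vH_inj (F := F) (K := K))]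
    apply Set.ncard_le_ncard _ (Set.toFinite _)
    rintro _ ⟨p, -, rfl⟩
    exact ⟨fun hs => hST _ hs (hH p), adjEH p⟩
  have h2 : degIn (zdGraph (ZMod 2 × F × K)) S (vE F K)
      ≤ (Nat.card Fˣ - 1) + (Nat.card Kˣ - 1) := by
    have e1 : ({b}ᶜ : Set Fˣ).ncard = Nat.card Fˣ - 1 := by
      rw [Set.ncard_compl, Set.ncard_singleton]
    have e2 : ({c}ᶜ : Set Kˣ).ncard = Nat.card Kˣ - 1 := by
      rw [Set.ncard_compl, Set.ncard_singleton]
    rw [← e1, ← e2, ← Set.ncard_image_of_injective _ (vB_inj (F := F) (K := K)),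
      ← Set.ncard_image_of_injective _ (vC_inj (F := F) (K := K))]
    refine le_trans (Set.ncard_le_ncard ?_ (Set.toFinite _)) (Set.ncard_union_le _ _)
    rintro u ⟨hu, hadj⟩
    rcases adjE u hadj with ⟨i, rfl⟩ | ⟨i, rfl⟩ | ⟨p, rfl⟩
    · refine Or.inl ⟨i, ?_, rfl⟩
      rintro rfl
      exact hST _ hu hb
    · refine Or.inr ⟨i, ?_, rfl⟩
      rintro rfl
      exact hST _ hu hc
    · exact absurd (hH p) (hST _ hu)
  generalize Nat.card Fˣ = f at *
  generalize Nat.card Kˣ = k at *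
  have h3 : f * k + 1 ≤ f + k := by omega
  nlinarith

end Stmt14

/-- For finite fields `F`, `K` with `|F|, |K| ≥ 3`, `Γ(ℤ₂ × F × K)` is not
partitionable into global defensive alliances. -/
theorem stmt14 (F K : Type*) [Field F] [Finite F] [Field K] [Finite K]
    (hF : 3 ≤ Nat.card F) (hK : 3 ≤ Nat.card K) :
    ¬ PartitionableGDA (zdGraph (ZMod 2 × F × K)) := by
  unfold PartitionableGDA
  rw [not_le, Nat.lt_succ_iff]
  apply csSup_le'
  rintro n ⟨P, hP, rfl⟩
  by_contra! hn
  have hE : Stmt14.vE F K ∈ ⋃₀ (P : Set (Set (ZDV (ZMod 2 × F × K)))) := by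
    rw [hP.2.1]; trivial
  obtain ⟨S, hS, hES⟩ := hE
  obtain ⟨T, hT, hne⟩ := Finset.exists_mem_ne hn S
  exact Stmt14.no_two hF hK S T (hP.1 S hS) (hP.1 T hT) (hP.2.2 hS hT hne.symm) hES
end
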